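/- arXiv:2007.08967 — 2 statements merged into one kernel-verified Lean document; each statement's English description precedes it below -/
import Mathlib

section
/- Let G be a finite group and Ψ: G → G a fixed point free abelian endomorphism. Then: (i) the map g ↦ g Ψ(g)⁻¹ is a bijection of G; (ii) the unique map ψ: G → G satisfying ψ(g Ψ(g)⁻¹) = Ψ(g)⁻¹ for all g ∈ G is a fixed point free abelian endomorphism of G; and (iii) for all g, h ∈ G one has η_{g Ψ(g)⁻¹}(h) = g h Ψ(g)⁻¹ (where η is formed with respect to ψ), so that N_ψ = {h ↦ g h Ψ(g)⁻¹ : g ∈ G}. -/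
/-!
Write `f g = g * (Ψ g)⁻¹`. Since `f g = f h` says that `Ψ` fixes `h⁻¹ * g`, fixed point freeness
makes `f` injective. If `a ∈ Ψ(G)` solves `f a = Ψ x`, then `f (x * a) = x`, so `f` is onto as soon
as its restriction to the finite group `Ψ(G)` is, where injectivity suffices.

When `Ψ` is abelian, it does not see the conjugation in `η_g(h) = g Ψ(g)⁻¹ h Ψ(g)`. Hence
`f (η_g(h)) = f g * f h` and `Ψ (η_g(h)) = Ψ g * Ψ h`, and these two identities show that `ψ`,
which is determined by `ψ ∘ f = Ψ(·)⁻¹`, is again multiplicative.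
-/

open Function

section MulInvMap

open MonoidHom

variable {G : Type*} [Group G] {Ψ : G →* G}

theorem fixedPointFree_rangeRestrict_comp_subtype (hΨ : FixedPointFree Ψ) :
    FixedPointFree (Ψ.rangeRestrict.comp Ψ.range.subtype) :=
  fun a ha ↦ Subtype.ext (hΨ a (congrArg Subtype.val ha))

theorem injective_mul_inv_map (hΨ : FixedPointFree Ψ) : Injective fun g ↦ g * (Ψ g)⁻¹ := by
  simpa only [commutatorMap_apply, div_eq_mul_inv, Injective] using hΨ.commutatorMap_injective

theorem surjective_mul_inv_map [Finite Ψ.range] (hΨ : FixedPointFree Ψ) :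
    Surjective fun g ↦ g * (Ψ g)⁻¹ := by
  intro x
  obtain ⟨a, ha⟩ :=
    (fixedPointFree_rangeRestrict_comp_subtype hΨ).commutatorMap_surjective (Ψ.rangeRestrict x)
  have ha' : (a : G) * (Ψ a)⁻¹ = Ψ x := by
    simpa [div_eq_mul_inv] using congrArg Subtype.val ha
  refine ⟨x * a, ?_⟩
  calc x * a * (Ψ (x * a))⁻¹ = x * (a * (Ψ a)⁻¹) * (Ψ x)⁻¹ := by
        rw [map_mul]; group
    _ = x := by rw [ha', mul_inv_cancel_right]

theorem bijective_mul_inv_map [Finite Ψ.range] (hΨ : FixedPointFree Ψ) :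
    Bijective fun g ↦ g * (Ψ g)⁻¹ :=
  ⟨injective_mul_inv_map hΨ, surjective_mul_inv_map hΨ⟩

end MulInvMap

section Eta

variable {G : Type*} [Group G]

/-- The permutation `η_g` of `G` attached to `ψ`, evaluated at `h`. It is defined for an arbitrary
map `ψ`, so that it makes sense before `ψ` is known to be an endomorphism. -/
def eta (ψ : G → G) (g h : G) : G :=
  g * (ψ g)⁻¹ * h * ψ g

variable {Ψ : G →* G}

theorem map_eta (hab : ∀ x y, Commute (Ψ x) (Ψ y)) (g h : G) : Ψ (eta Ψ g h) = Ψ g * Ψ h := by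
  simp only [eta, map_mul, map_inv, mul_assoc, (hab h (Ψ g)).eq, inv_mul_cancel_left]

theorem mul_inv_map_eta (hab : ∀ x y, Commute (Ψ x) (Ψ y)) (g h : G) :
    eta Ψ g h * (Ψ (eta Ψ g h))⁻¹ = g * (Ψ g)⁻¹ * (h * (Ψ h)⁻¹) := by
  rw [map_eta hab, (hab g h).eq, eta]
  group

end Eta

/-- `ψ` is a quasi-inverse of the endomorphism `Ψ`: it sends `g Ψ(g)⁻¹` to `Ψ(g)⁻¹`. In additive
notation this is the identity `(1 - ψ)(1 - Ψ) = 1`, i.e. quasi-inversion in the sense of ring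
theory. It is stated for a bare map `ψ`, since multiplicativity is to be proved. -/
def IsQuasiInverse {G : Type*} [Group G] (Ψ : G →* G) (ψ : G → G) : Prop :=
  ∀ g, ψ (g * (Ψ g)⁻¹) = (Ψ g)⁻¹

theorem existsUnique_isQuasiInverse {G : Type*} [Group G] {Ψ : G →* G}
    (hbij : Bijective fun g ↦ g * (Ψ g)⁻¹) : ∃! ψ, IsQuasiInverse Ψ ψ := by
  simpa only [IsQuasiInverse, funext_iff, comp_apply] using
    hbij.comp_right.existsUnique fun g ↦ (Ψ g)⁻¹

namespace IsQuasiInverse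

variable {G : Type*} [Group G] {Ψ : G →* G} {ψ : G → G}

theorem mul_inv_map_mul_inv (hψ : IsQuasiInverse Ψ ψ) (g : G) :
    g * (Ψ g)⁻¹ * (ψ (g * (Ψ g)⁻¹))⁻¹ = g := by
  rw [hψ, mul_inv_cancel_right]

theorem eta_mul_inv_map (hψ : IsQuasiInverse Ψ ψ) (g h : G) :
    eta ψ (g * (Ψ g)⁻¹) h = g * h * (Ψ g)⁻¹ := by
  rw [eta, hψ.mul_inv_map_mul_inv, hψ]

theorem map_mul (hψ : IsQuasiInverse Ψ ψ) (hsurj : Surjective fun g ↦ g * (Ψ g)⁻¹)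
    (hab : ∀ x y, Commute (Ψ x) (Ψ y)) (x y : G) : ψ (x * y) = ψ x * ψ y := by
  obtain ⟨g, rfl⟩ := hsurj x
  obtain ⟨h, rfl⟩ := hsurj y
  calc ψ (g * (Ψ g)⁻¹ * (h * (Ψ h)⁻¹)) = ψ (eta Ψ g h * (Ψ (eta Ψ g h))⁻¹) := by
        rw [mul_inv_map_eta hab]
    _ = (Ψ g * Ψ h)⁻¹ := by rw [hψ, map_eta hab]
    _ = (Ψ g)⁻¹ * (Ψ h)⁻¹ := by rw [(hab g h).eq, mul_inv_rev]
    _ = ψ (g * (Ψ g)⁻¹) * ψ (h * (Ψ h)⁻¹) := by rw [hψ, hψ]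

theorem commute (hψ : IsQuasiInverse Ψ ψ) (hsurj : Surjective fun g ↦ g * (Ψ g)⁻¹)
    (hab : ∀ x y, Commute (Ψ x) (Ψ y)) (x y : G) : Commute (ψ x) (ψ y) := by
  obtain ⟨g, rfl⟩ := hsurj x
  obtain ⟨h, rfl⟩ := hsurj y
  simpa only [hψ g, hψ h] using (hab g h).inv_inv

theorem fixedPointFree (hψ : IsQuasiInverse Ψ ψ) (hsurj : Surjective fun g ↦ g * (Ψ g)⁻¹) :
    MonoidHom.FixedPointFree ψ := by
  intro x hx
  obtain ⟨g, rfl⟩ := hsurj x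
  have hg : g = 1 := by rw [← hψ.mul_inv_map_mul_inv g, hx, mul_inv_cancel]
  simp [hg]

end IsQuasiInverse

theorem fpf_quasi_inverse_general {G : Type*} [Group G] (Ψ : G →* G) [Finite Ψ.range]
    (hab : ∀ x y, Commute (Ψ x) (Ψ y)) (hfpf : MonoidHom.FixedPointFree Ψ) :
    Bijective (fun g ↦ g * (Ψ g)⁻¹) ∧
    (∃! ψ, IsQuasiInverse Ψ ψ) ∧
    (∀ ψ, IsQuasiInverse Ψ ψ →
      (∀ x y, ψ (x * y) = ψ x * ψ y) ∧
      (∀ x y, Commute (ψ x) (ψ y)) ∧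
      MonoidHom.FixedPointFree ψ ∧
      (∀ g h, eta ψ (g * (Ψ g)⁻¹) h = g * h * (Ψ g)⁻¹)) := by
  have hbij : Bijective fun g ↦ g * (Ψ g)⁻¹ := bijective_mul_inv_map hfpf
  have hsurj := hbij.surjective
  exact ⟨hbij, existsUnique_isQuasiInverse hbij, fun _ hψ ↦
    ⟨hψ.map_mul hsurj hab, hψ.commute hsurj hab, hψ.fixedPointFree hsurj, hψ.eta_mul_inv_map⟩⟩

/-- Let `Ψ` be a fixed point free abelian endomorphism of a finite
group `G`. Then (i) `g ↦ g Ψ(g)⁻¹` is a bijection of `G`; (ii) any map `ψ : G → G`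
satisfying `ψ(g Ψ(g)⁻¹) = Ψ(g)⁻¹` for all `g` (it is unique) is a fixed point free
abelian endomorphism; (iii) `η_{g Ψ(g)⁻¹}(h) = g h Ψ(g)⁻¹` for all `g, h ∈ G`, where
`η` is formed with respect to `ψ`. -/
theorem fpf_quasi_inverse {G : Type*} [Group G] [Finite G]
    (Ψ : G →* G) (hab : ∀ x y : G, Ψ x * Ψ y = Ψ y * Ψ x)
    (hfpf : ∀ g : G, Ψ g = g → g = 1) :
    Function.Bijective (fun g : G => g * (Ψ g)⁻¹) ∧
    (∃! ψ : G → G, ∀ g : G, ψ (g * (Ψ g)⁻¹) = (Ψ g)⁻¹) ∧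
    (∀ ψ : G → G, (∀ g : G, ψ (g * (Ψ g)⁻¹) = (Ψ g)⁻¹) →
      (∀ x y : G, ψ (x * y) = ψ x * ψ y) ∧
      (∀ x y : G, ψ x * ψ y = ψ y * ψ x) ∧
      (∀ g : G, ψ g = g → g = 1) ∧
      (∀ g h : G,
        (g * (Ψ g)⁻¹) * (ψ (g * (Ψ g)⁻¹))⁻¹ * h * ψ (g * (Ψ g)⁻¹) = g * h * (Ψ g)⁻¹)) :=
  fpf_quasi_inverse_general Ψ hab hfpf
end

section
/- Let G be a group and ψ: G → G an abelian endomorphism, and define g ∘ h = g ψ(g)⁻¹ h ψ(g). Then the inverse of g in the group (G, ∘) is ḡ = ψ(g) g⁻¹ ψ(g)⁻¹, and the opposite skew brace relation g (h ∘ k) = (g h) ∘ ḡ ∘ (g k) holds for all g, h, k ∈ G (where juxtaposition is the original multiplication of G); hence (G, ·, ∘) is a bi-skew brace. -/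
/-!
Write `γ_g` for conjugation by `ψ g`, so that `g ∘ h = g γ_g⁻¹(h)` and `ḡ = γ_g(g⁻¹)`. Then `γ` is a
homomorphism `G → Aut G` that sends `γ_g(h)` to `γ_g γ_h γ_g⁻¹`: for `ψ` of abelian image both of
these are `γ_h`, and in general they agree when the commutators of `ψ(g)⁻¹ ψ(ψ(g))` with `ψ(h)` are
central, for instance when `ψ` is idempotent.

It follows that `γ` reverses `∘`: `γ_{g ∘ h} = γ_h γ_g` and `γ_ḡ = γ_g⁻¹`. Hence `γ` takes the value
`γ_h` at `(gh) ∘ ḡ = g h γ_h⁻¹(g⁻¹)`, and the inner factors `g` cancel in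
`(gh) ∘ ḡ ∘ (gk) = g h γ_h⁻¹(g⁻¹) γ_h⁻¹(g k) = g h γ_h⁻¹(k) = g (h ∘ k)`.
-/

open scoped commutatorElement

section TwistedMul

variable {G : Type*} [Group G]

/-- The operation `g ∘ h = g γ_g⁻¹(h)` attached to `γ : G → Aut G`. The inverse of `γ_g` is used so
that conjugation by `ψ g` gives the operation `g ψ(g)⁻¹ h ψ(g)` of an abelian map `ψ` while `γ`
stays a homomorphism. -/
def twistedMul (γ : G →* MulAut G) (g h : G) : G :=
  g * (γ g)⁻¹ h

/-- The inverse `ḡ = γ_g(g⁻¹)` of `g` for `twistedMul γ`. -/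
def twistedInv (γ : G →* MulAut G) (g : G) : G :=
  γ g g⁻¹

/-- Equivariance of `γ : G → Aut G` for the action of `G` on itself through `γ` and its action on
`Aut G` by conjugation through `γ`. This is the condition on `γ` behind the opposite skew brace
relation for `twistedMul γ`. -/
def IsConjEquivariant (γ : G →* MulAut G) : Prop :=
  ∀ g h : G, γ (γ g h) = γ g * γ h * (γ g)⁻¹

theorem twistedMul_twistedInv (γ : G →* MulAut G) (g : G) :
    twistedMul γ g (twistedInv γ g) = 1 := by
  simp [twistedMul, twistedInv]

namespace IsConjEquivariant

variable {γ : G →* MulAut G} (hγ : IsConjEquivariant γ)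
include hγ

theorem map_inv_apply (g h : G) : γ ((γ g)⁻¹ h) = (γ g)⁻¹ * γ h * γ g := by
  simpa only [map_inv, inv_inv] using hγ g⁻¹ h

theorem map_twistedMul (g h : G) : γ (twistedMul γ g h) = γ h * γ g := by
  rw [twistedMul, map_mul, hγ.map_inv_apply]
  group

theorem map_twistedInv (g : G) : γ (twistedInv γ g) = (γ g)⁻¹ := by
  rw [twistedInv, hγ, map_inv]
  group

theorem twistedInv_twistedMul (g : G) : twistedMul γ (twistedInv γ g) g = 1 := by
  rw [twistedMul, hγ.map_twistedInv, inv_inv, twistedInv, ← map_mul, inv_mul_cancel, map_one]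

theorem mul_twistedMul (g h k : G) :
    g * twistedMul γ h k =
      twistedMul γ (twistedMul γ (g * h) (twistedInv γ g)) (g * k) := by
  have twist_eq : γ (twistedMul γ (g * h) (twistedInv γ g)) = γ h := by
    rw [hγ.map_twistedMul, hγ.map_twistedInv, map_mul, inv_mul_cancel_left]
  have inner_eq : twistedMul γ (g * h) (twistedInv γ g) = g * h * (γ h)⁻¹ g⁻¹ := by
    simp [twistedMul, twistedInv]
  calc
    g * twistedMul γ h k = g * h * (γ h)⁻¹ k := (mul_assoc ..).symm
    _ = g * h * (γ h)⁻¹ g⁻¹ * (γ h)⁻¹ (g * k) := by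
      rw [mul_assoc (g * h), ← map_mul, inv_mul_cancel_left]
    _ = twistedMul γ (twistedMul γ (g * h) (twistedInv γ g)) (g * k) := by
      rw [twistedMul.eq_def γ (twistedMul _ _ _), twist_eq, inner_eq]

end IsConjEquivariant

theorem twistedMul_conj_comp (ψ : G →* G) (g h : G) :
    twistedMul (MulAut.conj.comp ψ) g h = g * (ψ g)⁻¹ * h * ψ g := by
  simp [twistedMul, mul_assoc]

theorem twistedInv_conj_comp (ψ : G →* G) (g : G) :
    twistedInv (MulAut.conj.comp ψ) g = ψ g * g⁻¹ * (ψ g)⁻¹ :=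
  rfl

theorem ker_mulAutConj : (MulAut.conj : G →* MulAut G).ker = Subgroup.center G := by
  ext x
  simp only [MonoidHom.mem_ker, MulEquiv.ext_iff, MulAut.conj_apply, MulAut.one_apply,
    Subgroup.mem_center_iff, mul_inv_eq_iff_eq_mul]
  exact forall_congr' fun _ => eq_comm

theorem conj_eq_conj_iff_commutatorElement_eq_one {a b x : G} :
    a * x * a⁻¹ = b * x * b⁻¹ ↔ ⁅b⁻¹ * a, x⁆ = 1 := by
  rw [commutatorElement_eq_one_iff_mul_comm, mul_inv_eq_iff_eq_mul, mul_assoc b⁻¹,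
    inv_mul_eq_iff_eq_mul]
  simp only [mul_assoc]

theorem isConjEquivariant_conj_comp_iff {ψ : G →* G} :
    IsConjEquivariant (MulAut.conj.comp ψ) ↔
      ∀ g h : G, ⁅(ψ g)⁻¹ * ψ (ψ g), ψ h⁆ ∈ Subgroup.center G := by
  refine forall₂_congr fun g h => ?_
  calc
    MulAut.conj.comp ψ (MulAut.conj.comp ψ g h) =
        MulAut.conj.comp ψ g * MulAut.conj.comp ψ h * (MulAut.conj.comp ψ g)⁻¹ ↔
        MulAut.conj (ψ (ψ g)) * MulAut.conj (ψ h) * (MulAut.conj (ψ (ψ g)))⁻¹ =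
          MulAut.conj (ψ g) * MulAut.conj (ψ h) * (MulAut.conj (ψ g))⁻¹ := by
      simp only [MonoidHom.comp_apply, MulAut.conj_apply, map_mul, map_inv]
    _ ↔ ⁅(MulAut.conj (ψ g))⁻¹ * MulAut.conj (ψ (ψ g)), MulAut.conj (ψ h)⁆ = 1 :=
      conj_eq_conj_iff_commutatorElement_eq_one
    _ ↔ ⁅(ψ g)⁻¹ * ψ (ψ g), ψ h⁆ ∈ Subgroup.center G := by
      rw [← ker_mulAutConj, MonoidHom.mem_ker, map_commutatorElement, map_mul, map_inv]

end TwistedMul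

theorem abelian_map_biskew_general {G : Type*} [Group G]
    (ψ : G →* G) (hψ : ∀ g h : G, ⁅(ψ g)⁻¹ * ψ (ψ g), ψ h⁆ ∈ Subgroup.center G)
    (circ : G → G → G)
    (hcirc : ∀ g h : G, circ g h = g * (ψ g)⁻¹ * h * ψ g) :
    (∀ g : G, circ g (ψ g * g⁻¹ * (ψ g)⁻¹) = 1 ∧ circ (ψ g * g⁻¹ * (ψ g)⁻¹) g = 1) ∧
    (∀ g h k : G,
      g * circ h k = circ (circ (g * h) (ψ g * g⁻¹ * (ψ g)⁻¹)) (g * k)) := by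
  have hγ : IsConjEquivariant (MulAut.conj.comp ψ) := isConjEquivariant_conj_comp_iff.mpr hψ
  obtain rfl : circ = twistedMul (MulAut.conj.comp ψ) := by
    ext g h
    rw [hcirc, twistedMul_conj_comp]
  simp only [← twistedInv_conj_comp]
  exact ⟨fun g => ⟨twistedMul_twistedInv _ g, hγ.twistedInv_twistedMul g⟩, hγ.mul_twistedMul⟩

/-- For an abelian endomorphism `ψ` of a group `G`, with
`g ∘ h = g ψ(g)⁻¹ h ψ(g)`, the `∘`-inverse of `g` is `ḡ = ψ(g) g⁻¹ ψ(g)⁻¹`, and the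
opposite skew brace relation `g (h ∘ k) = (g h) ∘ ḡ ∘ (g k)` holds; hence
`(G, ·, ∘)` is a bi-skew brace. -/
theorem abelian_map_biskew {G : Type*} [Group G]
    (ψ : G →* G) (hab : ∀ x y : G, ψ x * ψ y = ψ y * ψ x)
    (circ : G → G → G)
    (hcirc : ∀ g h : G, circ g h = g * (ψ g)⁻¹ * h * ψ g) :
    (∀ g : G, circ g (ψ g * g⁻¹ * (ψ g)⁻¹) = 1 ∧ circ (ψ g * g⁻¹ * (ψ g)⁻¹) g = 1) ∧
    (∀ g h k : G,
      g * circ h k = circ (circ (g * h) (ψ g * g⁻¹ * (ψ g)⁻¹)) (g * k)) :=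
  abelian_map_biskew_general ψ
    (fun _ h => by simp [← map_inv, ← map_mul, commutatorElement_eq_one_iff_mul_comm.mpr (hab _ h)])
    circ hcirc
end
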